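/- Fix reals d and k with k ≥ 2 and 2k ≤ d, and set C_{k,d} = e^{−4} (2k/d)^{1 + 1/(k−1)}. Then for every real α with 0 < α < C_{k,d}, (d/2)·( h(2k/d) + 2·h(1 − 2k/d) ) + (k − 1)·log α < 0. -/

import Mathlib

/-!
Negativity of `(d/2)(h(2k/d) + 2h(1 - 2k/d)) + (k-1) log α` for `α` below
`C_{k,d} = e^{-4} (2k/d)^{1 + 1/(k-1)}`.
-/

noncomputable section

/-- `h(x) = -x log x`, with `h(0) = 0` (automatic since `Real.log 0 = 0`). -/
def h (x : ℝ) : ℝ := -(x * Real.log x)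

/-!
With `x = 2k/d`, the bound `h (1 - x) ≤ x` makes the entropy term at most
`(d/2) * x * (2 - log x) = k * (2 - log x)`. The exponent `1 + 1/(k-1)` is chosen so that
multiplying by `k - 1` gives `(k - 1) * log α < k * log x - 4 * (k - 1)`: the logarithms cancel,
and what is left is `2 * k - 4 * (k - 1) = 4 - 2 * k ≤ 0`.
-/

theorem h_eq_negMulLog : h = Real.negMulLog :=
  Real.negMulLog_eq_neg.symm

theorem h_add_two_mul_h_one_sub_le {x : ℝ} (hx : x ≤ 1) :
    h x + 2 * h (1 - x) ≤ x * (2 - Real.log x) := by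
  have h_one_sub : h (1 - x) ≤ x := by
    simpa only [h_eq_negMulLog, sub_sub_cancel] using
      Real.negMulLog_le_one_sub_self (sub_nonneg.mpr hx)
  calc
    h x + 2 * h (1 - x) ≤ h x + 2 * x := by gcongr
    _ = x * (2 - Real.log x) := by unfold h; ring

theorem mul_log_lt_of_lt_exp_mul_rpow {p c x α : ℝ} (hp : 0 < p) (hx : 0 < x) (hα0 : 0 < α)
    (hα : α < Real.exp c * x ^ (1 + 1 / p)) :
    p * Real.log α < p * c + (p + 1) * Real.log x := by
  calc
    p * Real.log α < p * Real.log (Real.exp c * x ^ (1 + 1 / p)) := by gcongr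
    _ = p * (c + (1 + 1 / p) * Real.log x) := by
      rw [Real.log_mul (Real.exp_ne_zero c) (Real.rpow_pos_of_pos hx _).ne', Real.log_exp,
        Real.log_rpow hx]
    _ = p * c + (p + 1) * Real.log x := by field_simp

/-- For reals `k ≥ 2` with `2k ≤ d` and `0 < α < C_{k,d} = e^{-4}(2k/d)^{1+1/(k-1)}`,
`(d/2)(h(2k/d) + 2 h(1 - 2k/d)) + (k - 1) log α < 0`. -/
theorem entropy_log_term_negative (d k : ℝ) (hk : 2 ≤ k) (hkd : 2 * k ≤ d)
    (α : ℝ) (hα0 : 0 < α)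
    (hα : α < Real.exp (-4) * (2 * k / d) ^ (1 + 1 / (k - 1))) :
    d / 2 * (h (2 * k / d) + 2 * h (1 - 2 * k / d)) + (k - 1) * Real.log α < 0 := by
  have hd : 0 < d := by linarith
  set x := 2 * k / d with hx
  have hx0 : 0 < x := by positivity
  have hx1 : x ≤ 1 := (div_le_one hd).mpr hkd
  have entropy_le : d / 2 * (h x + 2 * h (1 - x)) ≤ k * (2 - Real.log x) := calc
    d / 2 * (h x + 2 * h (1 - x)) ≤ d / 2 * (x * (2 - Real.log x)) := by
      gcongr
      exact h_add_two_mul_h_one_sub_le hx1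
    _ = k * (2 - Real.log x) := by rw [hx]; field_simp
  have log_lt : (k - 1) * Real.log α < k * Real.log x - 4 * (k - 1) := by
    linarith [mul_log_lt_of_lt_exp_mul_rpow (by linarith : 0 < k - 1) hx0 hα0 hα]
  calc
    d / 2 * (h x + 2 * h (1 - x)) + (k - 1) * Real.log α
        < k * (2 - Real.log x) + (k * Real.log x - 4 * (k - 1)) :=
      add_lt_add_of_le_of_lt entropy_le log_lt
    _ = 4 - 2 * k := by ring
    _ ≤ 0 := by linarith

end
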